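/- Let f be a read-once monotone boolean formula whose canonical read-once tree has root a ·-node with children c₁, …, cₗ. Then for every pair of distinct children cⱼ, cⱼ' and every pair of variables x in the subtree of cⱼ and y in the subtree of cⱼ', x and y occur together in some prime implicant of f; i.e., the co-occurrence graph contains all edges between the variable sets of distinct children. -/

import Mathlib

/-- Monotone boolean formulas over variables of type `α`, built from variables
with conjunction and disjunction. -/
inductive BFormula (α : Type) : Type
  | var : α → BFormula α
  | and : BFormula α → BFormula α → BFormula α
  | or  : BFormula α → BFormula α → BFormula α

namespace BFormula

/-- Evaluation of a boolean formula under a truth assignment. -/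
def eval {α : Type} (v : α → Bool) : BFormula α → Bool
  | var x => v x
  | and f g => f.eval v && g.eval v
  | or f g => f.eval v || g.eval v

/-- The set of variables occurring in a formula. -/
def vars {α : Type} [DecidableEq α] : BFormula α → Finset α
  | var x => {x}
  | and f g => f.vars ∪ g.vars
  | or f g => f.vars ∪ g.vars

/-- The number of occurrences of the variable `x` in a formula. -/
def count {α : Type} [DecidableEq α] (x : α) : BFormula α → ℕ
  | var y => if y = x then 1 else 0
  | and f g => f.count x + g.count x
  | or f g => f.count x + g.count x

/-- `S` is an implicant of `f`: setting all the variables of `S` to true forces `f` true. -/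
def IsImplicant {α : Type} (f : BFormula α) (S : Finset α) : Prop :=
  ∀ v : α → Bool, (∀ x ∈ S, v x = true) → f.eval v = true

/-- `S` is a prime implicant of `f`: a minimal implicant. -/
def IsPrimeImplicant {α : Type} (f : BFormula α) (S : Finset α) : Prop :=
  f.IsImplicant S ∧ ∀ T ⊂ S, ¬ f.IsImplicant T

end BFormula

/-!
In a read-once formula the two operands of every node have disjoint variable sets. Hence the union
of prime implicants of `g` and `h` is a prime implicant of `g · h`, and a prime implicant of `g` or
of `h` is still one of `g + h`, because a set that avoids the variables of an operand cannot imply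
it. By induction every variable of a read-once formula lies in a prime implicant; joining one
through `x` with one through `y` at the root gives a prime implicant of `f` containing both.
-/

namespace BFormula

section Implicant

variable {α : Type} {g h f : BFormula α} {S T : Finset α}

theorem eval_monotone (f : BFormula α) : Monotone fun v => f.eval v := by
  induction f with
  | var x => exact fun _ _ hvw => hvw x
  | and g h ihg ihh => exact ihg.inf ihh
  | or g h ihg ihh => exact ihg.sup ihh

theorem IsImplicant.mono (hS : f.IsImplicant S) (hST : S ⊆ T) : f.IsImplicant T :=
  fun v hv => hS v fun x hx => hv x (hST hx)

theorem isImplicant_iff_eval_decide_mem [DecidableEq α] :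
    f.IsImplicant S ↔ f.eval (fun x => decide (x ∈ S)) = true := by
  refine ⟨fun hS => hS _ fun x hx => decide_eq_true hx, fun hS v hv => ?_⟩
  have hle : (fun x => decide (x ∈ S)) ≤ v := fun x hx => hv x (of_decide_eq_true hx)
  exact f.eval_monotone hle hS

theorem isImplicant_var {x : α} : (var x).IsImplicant S ↔ x ∈ S := by
  classical simp only [isImplicant_iff_eval_decide_mem, eval, decide_eq_true_eq]

theorem isImplicant_and : (g.and h).IsImplicant S ↔ g.IsImplicant S ∧ h.IsImplicant S := by
  classical simp only [isImplicant_iff_eval_decide_mem, eval, Bool.and_eq_true]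

theorem isImplicant_or : (g.or h).IsImplicant S ↔ g.IsImplicant S ∨ h.IsImplicant S := by
  classical simp only [isImplicant_iff_eval_decide_mem, eval, Bool.or_eq_true]

theorem isImplicant_vars [DecidableEq α] (f : BFormula α) : f.IsImplicant f.vars := by
  induction f with
  | var x => exact isImplicant_var.2 (Finset.mem_singleton_self x)
  | and g h ihg ihh =>
    exact isImplicant_and.2
      ⟨ihg.mono Finset.subset_union_left, ihh.mono Finset.subset_union_right⟩
  | or g h ihg _ => exact isImplicant_or.2 (.inl (ihg.mono Finset.subset_union_left))

theorem isPrimeImplicant_iff_minimal : f.IsPrimeImplicant S ↔ Minimal f.IsImplicant S :=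
  minimal_iff_forall_lt.symm

theorem exists_isPrimeImplicant (f : BFormula α) : ∃ S, f.IsPrimeImplicant S := by
  classical
  obtain ⟨S, -, hS⟩ := exists_minimal_le_of_wellFoundedLT f.IsImplicant _ f.isImplicant_vars
  exact ⟨S, isPrimeImplicant_iff_minimal.2 hS⟩

theorem isPrimeImplicant_var (x : α) : (var x).IsPrimeImplicant {x} := by
  refine isPrimeImplicant_iff_minimal.2
    ⟨isImplicant_var.2 (Finset.mem_singleton_self x), fun T hT _ => ?_⟩
  exact Finset.singleton_subset_iff.2 (isImplicant_var.1 hT)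

theorem IsPrimeImplicant.or_left (hS : g.IsPrimeImplicant S) (hh : ¬ h.IsImplicant S) :
    (g.or h).IsPrimeImplicant S := by
  refine ⟨isImplicant_or.2 (.inl hS.1), fun T hTS hT => ?_⟩
  rcases isImplicant_or.1 hT with hgT | hhT
  · exact hS.2 T hTS hgT
  · exact hh (hhT.mono hTS.subset)

theorem IsPrimeImplicant.or_right (hS : h.IsPrimeImplicant S) (hg : ¬ g.IsImplicant S) :
    (g.or h).IsPrimeImplicant S := by
  refine ⟨isImplicant_or.2 (.inr hS.1), fun T hTS hT => ?_⟩
  rcases isImplicant_or.1 hT with hgT | hhT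
  · exact hg (hgT.mono hTS.subset)
  · exact hS.2 T hTS hhT

end Implicant

section Vars

variable {α : Type} [DecidableEq α] {g h f : BFormula α} {S T : Finset α}

theorem IsImplicant.inter (hS : f.IsImplicant S) (hT : f.vars ⊆ T) : f.IsImplicant (S ∩ T) := by
  induction f with
  | var x =>
    rw [isImplicant_var] at hS ⊢
    exact Finset.mem_inter.2 ⟨hS, Finset.singleton_subset_iff.1 hT⟩
  | and g h ihg ihh =>
    obtain ⟨hgT, hhT⟩ := Finset.union_subset_iff.1 hT
    exact isImplicant_and.2 ((isImplicant_and.1 hS).imp (ihg · hgT) (ihh · hhT))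
  | or g h ihg ihh =>
    obtain ⟨hgT, hhT⟩ := Finset.union_subset_iff.1 hT
    exact isImplicant_or.2 ((isImplicant_or.1 hS).imp (ihg · hgT) (ihh · hhT))

theorem not_isImplicant_of_disjoint_vars (hS : Disjoint S f.vars) : ¬ f.IsImplicant S := by
  induction f with
  | var x => exact isImplicant_var.not.2 (Finset.disjoint_singleton_right.1 hS)
  | and g h ihg _ =>
    exact fun hgh => ihg (Finset.disjoint_union_right.1 hS).1 (isImplicant_and.1 hgh).1
  | or g h ihg ihh =>
    obtain ⟨hg, hh⟩ := Finset.disjoint_union_right.1 hS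
    exact fun hgh => (isImplicant_or.1 hgh).elim (ihg hg) (ihh hh)

theorem IsPrimeImplicant.subset_of_inter_vars_subset (hS : f.IsPrimeImplicant S)
    (hT : f.IsImplicant T) (hTS : T ∩ f.vars ⊆ S) : S ⊆ T :=
  ((isPrimeImplicant_iff_minimal.1 hS).2 (hT.inter subset_rfl) hTS).trans Finset.inter_subset_left

theorem IsPrimeImplicant.subset_vars (hS : f.IsPrimeImplicant S) : S ⊆ f.vars :=
  Finset.inter_eq_left.1 <| (isPrimeImplicant_iff_minimal.1 hS).eq_of_le
    (hS.1.inter subset_rfl) Finset.inter_subset_left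

theorem IsPrimeImplicant.and (hS : g.IsPrimeImplicant S) (hT : h.IsPrimeImplicant T)
    (hgh : Disjoint g.vars h.vars) : (g.and h).IsPrimeImplicant (S ∪ T) := by
  have hST : (g.and h).IsImplicant (S ∪ T) := isImplicant_and.2
    ⟨hS.1.mono Finset.subset_union_left, hT.1.mono Finset.subset_union_right⟩
  refine isPrimeImplicant_iff_minimal.2 ⟨hST, fun U hU hUST => ?_⟩
  obtain ⟨hgU, hhU⟩ := isImplicant_and.1 hU
  have hUS : U ∩ g.vars ⊆ S := by
    have hgT : Disjoint g.vars T := hgh.mono_right hT.subset_vars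
    grind [Finset.disjoint_left]
  have hUT : U ∩ h.vars ⊆ T := by
    have hSh : Disjoint S h.vars := hgh.mono_left hS.subset_vars
    grind [Finset.disjoint_left]
  exact Finset.union_subset (hS.subset_of_inter_vars_subset hgU hUS)
    (hT.subset_of_inter_vars_subset hhU hUT)

end Vars

section ReadOnce

variable {α : Type} [DecidableEq α] {g h f : BFormula α}

/-- The read-once property: every variable occurs exactly once. It is required only on `f.vars`,
since `f.count x = 0` for every other `x`. -/
def IsReadOnce (f : BFormula α) : Prop :=
  ∀ x ∈ f.vars, f.count x = 1

theorem count_pos_iff_mem_vars {x : α} : 0 < f.count x ↔ x ∈ f.vars := by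
  induction f with
  | var y => grind [count, vars]
  | and g h ihg ihh | or g h ihg ihh =>
    simp only [count, vars, Nat.add_pos_iff_pos_or_pos, Finset.mem_union, ihg, ihh]

theorem isReadOnce_and :
    (g.and h).IsReadOnce ↔ g.IsReadOnce ∧ h.IsReadOnce ∧ Disjoint g.vars h.vars := by
  simp only [IsReadOnce, count, vars, Finset.mem_union, Finset.disjoint_left,
    ← count_pos_iff_mem_vars]
  grind

theorem isReadOnce_or :
    (g.or h).IsReadOnce ↔ g.IsReadOnce ∧ h.IsReadOnce ∧ Disjoint g.vars h.vars :=
  isReadOnce_and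

theorem IsReadOnce.exists_isPrimeImplicant_mem (hf : f.IsReadOnce) {x : α} (hx : x ∈ f.vars) :
    ∃ S, f.IsPrimeImplicant S ∧ x ∈ S := by
  induction f with
  | var y => exact ⟨{y}, isPrimeImplicant_var y, hx⟩
  | and g h ihg ihh =>
    obtain ⟨hg, hh, hgh⟩ := isReadOnce_and.1 hf
    rcases Finset.mem_union.1 hx with hxg | hxh
    · obtain ⟨S, hS, hxS⟩ := ihg hg hxg
      obtain ⟨T, hT⟩ := h.exists_isPrimeImplicant
      exact ⟨S ∪ T, hS.and hT hgh, Finset.mem_union_left T hxS⟩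
    · obtain ⟨S, hS⟩ := g.exists_isPrimeImplicant
      obtain ⟨T, hT, hxT⟩ := ihh hh hxh
      exact ⟨S ∪ T, hS.and hT hgh, Finset.mem_union_right S hxT⟩
  | or g h ihg ihh =>
    obtain ⟨hg, hh, hgh⟩ := isReadOnce_or.1 hf
    rcases Finset.mem_union.1 hx with hxg | hxh
    · obtain ⟨S, hS, hxS⟩ := ihg hg hxg
      have hSh : Disjoint S h.vars := hgh.mono_left hS.subset_vars
      exact ⟨S, hS.or_left (not_isImplicant_of_disjoint_vars hSh), hxS⟩
    · obtain ⟨T, hT, hxT⟩ := ihh hh hxh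
      have hTg : Disjoint T g.vars := hgh.symm.mono_left hT.subset_vars
      exact ⟨T, hT.or_right (not_isImplicant_of_disjoint_vars hTg), hxT⟩

end ReadOnce

end BFormula

/-- If `f` is a read-once monotone boolean formula whose canonical read-once tree has
root a `·`-node with children `g` and `h`, then every variable of `g` occurs together
with every variable of `h` in some prime implicant of `f`: the co-occurrence graph
contains all edges between the variable sets of distinct children. -/
theorem stmt10 {α : Type} [DecidableEq α] (g h f : BFormula α)
    (hf : f = g.and h)
    (hro : ∀ x ∈ f.vars, f.count x = 1) :
    ∀ x ∈ g.vars, ∀ y ∈ h.vars,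
      ∃ S : Finset α, f.IsPrimeImplicant S ∧ x ∈ S ∧ y ∈ S := by
  subst hf
  intro x hx y hy
  obtain ⟨hg, hh, hgh⟩ := BFormula.isReadOnce_and.1 hro
  obtain ⟨S, hS, hxS⟩ := hg.exists_isPrimeImplicant_mem hx
  obtain ⟨T, hT, hyT⟩ := hh.exists_isPrimeImplicant_mem hy
  exact ⟨S ∪ T, hS.and hT hgh, Finset.mem_union_left T hxS, Finset.mem_union_right S hyT⟩
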